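/- Suppose the matrix A has a real eigenvalue of odd algebraic multiplicity. Then the spectrum of L(Q) contains the main part of [0,∞) in the sense that lim_{n→∞} μ([0,n] \ σ(L(Q))) / μ(σ(L(Q)) ∩ [0,n]) = 0, where μ denotes Lebesgue measure on ℝ. -/

import Mathlib

open MeasureTheory Set Filter Topology Metric

open scoped Classical

noncomputable section

/-- The Bloch phase factor `e^{iπt}`. -/
def blochPhase (t : ℝ) : ℂ := Complex.exp (Complex.I * Real.pi * t)

/-- `Ψ` is a Bloch function of `L_t(Q)` with Bloch eigenvalue `lam`:
nonzero, twice continuously differentiable, satisfies `-Ψ'' + QΨ = lam Ψ`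
and `Ψ(x+π) = e^{iπt} Ψ(x)`. -/
def IsBlochPair {m : ℕ} (Q : ℝ → Matrix (Fin m) (Fin m) ℂ) (t : ℝ) (lam : ℂ)
    (Ψ : ℝ → Fin m → ℂ) : Prop :=
  Ψ ≠ 0 ∧ ContDiff ℝ 2 Ψ ∧
    (∀ x : ℝ, -(deriv (deriv Ψ) x) + (Q x).mulVec (Ψ x) = lam • Ψ x) ∧
    (∀ x : ℝ, Ψ (x + Real.pi) = blochPhase t • Ψ x)

/-- `lam` is a Bloch eigenvalue of `L_t(Q)`. -/
def IsBlochEigenvalue {m : ℕ} (Q : ℝ → Matrix (Fin m) (Fin m) ℂ) (t : ℝ) (lam : ℂ) : Prop :=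
  ∃ Ψ, IsBlochPair Q t lam Ψ

/-- `Ψ` is normalized: `∫₀^π |Ψ(x)|² dx = 1` (Euclidean norm on `ℂ^m`). -/
def IsNormalized {m : ℕ} (Ψ : ℝ → Fin m → ℂ) : Prop :=
  (∫ x in (0:ℝ)..Real.pi, ∑ i, ‖Ψ x i‖ ^ 2) = 1

/-- The index set `A(k,t)`. -/
def Akt (k : ℤ) (t : ℝ) : Set ℤ :=
  if t ∈ Set.Ioo (-(2:ℝ)/3) (-(1:ℝ)/3) ∪ Set.Ioo ((1:ℝ)/3) ((2:ℝ)/3) then {k}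
  else if t ∈ Set.Ioo (-(1:ℝ)/3) ((1:ℝ)/3) then {k, -k}
  else if t ∈ Set.Ioc ((2:ℝ)/3) 1 then {k, -k - 1}
  else if t ∈ Set.Ioo (-1 : ℝ) (-(2:ℝ)/3) then {k, -k + 1}
  else ∅

/-- The spectrum of `L(Q)`: the set of Bloch eigenvalues of `L_t(Q)` for some `t ∈ (-1,1]`. -/
def SpecLQ {m : ℕ} (Q : ℝ → Matrix (Fin m) (Fin m) ℂ) : Set ℂ :=
  {lam | ∃ t ∈ Set.Ioc (-1:ℝ) 1, IsBlochEigenvalue Q t lam}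

/-- The mean matrix `A = ∫₀^π Q(x) dx`. -/
def meanMatrix {m : ℕ} (Q : ℝ → Matrix (Fin m) (Fin m) ℂ) : Matrix (Fin m) (Fin m) ℂ :=
  Matrix.of fun i j => ∫ x in (0:ℝ)..Real.pi, Q x i j

/-!
Write `λ = ρ²` and `Ψ = u₊ + u₋`, `Ψ' = iρ(u₊ - u₋)`. The equation becomes a first-order system
for `(u₊, u₋)` whose monodromy matrix `M` over the period `π` is
`diag(e^{iπρ}, e^{-iπρ}) (1 + O(1/ρ))`, the upper left block of the correction being
`A / (2iρ) + O(1/ρ²)`. PT-symmetry says that `M⁻¹` is the entrywise conjugate of `M`; hence,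
restricted to the unit circle and multiplied by a suitable phase, the characteristic function of `M`
takes values in a fixed real line. At the points `e^{i(πρ - x / (2ρ))}` it is, after rescaling,
asymptotic to the characteristic polynomial of `A` at `x`, uniformly as long as `ρ` stays away from
the integers, where the two diagonal blocks resonate. A real root of odd multiplicity makes that
polynomial change sign, so by the intermediate value theorem `M` has an eigenvalue of modulus one,
that is, `ρ²` lies in the spectrum. The values `ρ ≤ √r` within `δ` of an integer account for only
`O(δ r)` of the length of `[0, r]`.
-/

open scoped Matrix

section DysonSeries

variable {𝔸 : Type*} [NormedRing 𝔸] [NormedAlgebra ℝ 𝔸]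

/-- The `n`-th term of the Dyson (Picard iteration) series of the linear equation `Y' = B Y`,
`Y 0 = 1`: the `n`-fold iterated integral `∫_{0 ≤ sₙ ≤ ⋯ ≤ s₁ ≤ x} B s₁ ⋯ B sₙ`. -/
def dysonTerm (B : ℝ → 𝔸) : ℕ → ℝ → 𝔸
  | 0 => fun _ => 1
  | n + 1 => fun x => ∫ s in (0 : ℝ)..x, B s * dysonTerm B n s

/-- The solution of the linear equation `Y' = B Y`, `Y 0 = 1`, as the sum of its Dyson series. -/
def fundamentalSolution (B : ℝ → 𝔸) (x : ℝ) : 𝔸 := ∑' n, dysonTerm B n x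

theorem fundamentalSolution_zero (B : ℝ → 𝔸) : fundamentalSolution B 0 = 1 := by
  have vanish : ∀ n ≠ 0, dysonTerm B n 0 = 0 := by
    rintro (_ | n) hn
    · exact absurd rfl hn
    · exact intervalIntegral.integral_same
  exact tsum_eq_single 0 vanish

variable {B : ℝ → 𝔸}

theorem continuous_dysonTerm (hB : Continuous B) : ∀ n, Continuous (dysonTerm B n)
  | 0 => continuous_const
  | n + 1 => intervalIntegral.continuous_primitive
      (fun a b => (hB.mul (continuous_dysonTerm hB n)).intervalIntegrable a b) 0

theorem norm_dysonTerm_le (hB : Continuous B) {K x : ℝ} (hK : ∀ s ∈ uIcc 0 x, ‖B s‖ ≤ K)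
    (n : ℕ) : ‖dysonTerm B n x‖ ≤ ‖(1 : 𝔸)‖ * ((K * |x|) ^ n / n.factorial) := by
  have hK0 : 0 ≤ K := (norm_nonneg _).trans (hK 0 left_mem_uIcc)
  induction n generalizing x with
  | zero => simp [dysonTerm]
  | succ n ih =>
    have hcont := hB.mul (continuous_dysonTerm hB n)
    have integrand_le : ∀ s ∈ uIoc 0 x, ‖B s * dysonTerm B n s‖ ≤
        (‖(1 : 𝔸)‖ * K ^ (n + 1) / n.factorial) * |s - 0| ^ n := by
      intro s hs
      have hs' : s ∈ uIcc 0 x := uIoc_subset_uIcc hs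
      calc ‖B s * dysonTerm B n s‖ ≤ ‖B s‖ * ‖dysonTerm B n s‖ := norm_mul_le _ _
        _ ≤ K * (‖(1 : 𝔸)‖ * ((K * |s|) ^ n / n.factorial)) := by
          gcongr
          · exact hK s hs'
          · exact ih fun r hr => hK r (uIcc_subset_uIcc_left hs' hr)
        _ = _ := by rw [sub_zero, mul_pow]; ring
    calc ‖dysonTerm B (n + 1) x‖ ≤ ∫ s in uIoc 0 x, ‖B s * dysonTerm B n s‖ :=
          intervalIntegral.norm_integral_le_integral_norm_uIoc
      _ ≤ ∫ s in uIoc 0 x, (‖(1 : 𝔸)‖ * K ^ (n + 1) / n.factorial) * |s - 0| ^ n :=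
          setIntegral_mono_on (intervalIntegrable_iff.1 (hcont.norm.intervalIntegrable 0 x))
            (intervalIntegrable_iff.1 (Continuous.intervalIntegrable (by fun_prop) _ _))
            measurableSet_uIoc integrand_le
      _ = _ := by
          rw [integral_const_mul, integral_pow_abs_sub_uIoc, sub_zero, Nat.factorial_succ, mul_pow]
          push_cast
          field_simp

variable [CompleteSpace 𝔸]

theorem hasDerivAt_dysonTerm_succ (hB : Continuous B) (n : ℕ) (x : ℝ) :
    HasDerivAt (dysonTerm B (n + 1)) (B x * dysonTerm B n x) x :=
  ((hB.mul (continuous_dysonTerm hB n)).integral_hasStrictDerivAt 0 x).hasDerivAt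

theorem summable_dysonTerm (hB : Continuous B) (x : ℝ) : Summable fun n => dysonTerm B n x := by
  obtain ⟨K, hK⟩ := isCompact_uIcc.exists_bound_of_continuousOn (hB.continuousOn (s := uIcc 0 x))
  exact ((Real.summable_pow_div_factorial (K * |x|)).mul_left _).of_norm_bounded
    (norm_dysonTerm_le hB hK)

theorem norm_fundamentalSolution_sub_sum_le (hB : Continuous B) {K x : ℝ}
    (hK : ∀ s ∈ uIcc 0 x, ‖B s‖ ≤ K) (k : ℕ) :
    ‖fundamentalSolution B x - ∑ n ∈ Finset.range k, dysonTerm B n x‖ ≤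
      ‖(1 : 𝔸)‖ * ((K * |x|) ^ k * Real.exp (K * |x|)) := by
  have hK0 : 0 ≤ K := (norm_nonneg _).trans (hK 0 left_mem_uIcc)
  have hexp : HasSum (fun n : ℕ => (K * |x|) ^ n / (n.factorial : ℝ)) (Real.exp (K * |x|)) := by
    rw [Real.exp_eq_exp_ℝ]
    exact NormedSpace.expSeries_div_hasSum_exp (K * |x|)
  have tail : fundamentalSolution B x - ∑ n ∈ Finset.range k, dysonTerm B n x =
      ∑' n, dysonTerm B (n + k) x := by
    rw [sub_eq_iff_eq_add']
    exact ((summable_dysonTerm hB x).sum_add_tsum_nat_add k).symm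
  rw [tail, ← mul_assoc]
  refine tsum_of_norm_bounded (hexp.mul_left _) fun n => (norm_dysonTerm_le hB hK (n + k)).trans ?_
  rw [mul_assoc, pow_add, mul_comm ((K * |x|) ^ n), mul_div_assoc]
  gcongr
  exact Nat.le_add_right n k

theorem hasDerivAt_fundamentalSolution (hB : Continuous B) (x : ℝ) :
    HasDerivAt (fundamentalSolution B) (B x * fundamentalSolution B x) x := by
  set U := ball (0 : ℝ) (|x| + 1)
  have hxU : x ∈ U := by simp [U]
  obtain ⟨K, hK⟩ := (isCompact_closedBall (0 : ℝ) (|x| + 1)).exists_bound_of_continuousOn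
    hB.continuousOn
  have hK0 : 0 ≤ K := (norm_nonneg _).trans (hK x (ball_subset_closedBall hxU))
  have deriv_le : ∀ n, ∀ y ∈ U, ‖B y * dysonTerm B n y‖ ≤
      K * (‖(1 : 𝔸)‖ * ((K * (|x| + 1)) ^ n / n.factorial)) := by
    intro n y hy
    have hyK : ∀ s ∈ uIcc 0 y, ‖B s‖ ≤ K := fun s hs => hK s <| ball_subset_closedBall <|
      (convex_ball _ _).ordConnected.uIcc_subset (mem_ball_self (by positivity)) hy hs
    have hyx : |y| ≤ |x| + 1 := by simpa using (mem_ball.1 hy).le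
    calc ‖B y * dysonTerm B n y‖ ≤ ‖B y‖ * ‖dysonTerm B n y‖ := norm_mul_le _ _
      _ ≤ K * (‖(1 : 𝔸)‖ * ((K * |y|) ^ n / n.factorial)) :=
          mul_le_mul (hyK y right_mem_uIcc) (norm_dysonTerm_le hB hyK n) (norm_nonneg _) hK0
      _ ≤ _ := by gcongr
  have hsum := summable_dysonTerm hB x
  have hderiv := hasDerivAt_tsum_of_isPreconnected (g := fun n => dysonTerm B (n + 1))
    (((Real.summable_pow_div_factorial _).mul_left _).mul_left _) isOpen_ball
    (convex_ball _ _).isPreconnected (fun n y _ => hasDerivAt_dysonTerm_succ hB n y) deriv_le hxU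
    ((summable_nat_add_iff 1).2 hsum) hxU
  rw [hsum.tsum_mul_left] at hderiv
  exact (hderiv.const_add 1).congr_of_eventuallyEq <| .of_forall fun y =>
    (summable_dysonTerm hB y).tsum_eq_zero_add

theorem eq_fundamentalSolution_mul (hB : Continuous B) {f : ℝ → 𝔸}
    (hf : ∀ x, HasDerivAt f (B x * f x) x) (x : ℝ) : f x = fundamentalSolution B x * f 0 := by
  obtain ⟨K, hK⟩ := (isCompact_closedBall (0 : ℝ) (|x| + 1)).exists_bound_of_continuousOn
    hB.continuousOn
  have hmem : ∀ y ∈ Ioo (-(|x| + 1)) (|x| + 1), y ∈ closedBall (0 : ℝ) (|x| + 1) := fun y hy => by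
    simpa using (abs_lt.2 hy).le
  have lipschitz : ∀ y ∈ Ioo (-(|x| + 1)) (|x| + 1),
      LipschitzOnWith K.toNNReal (fun z => B y * z) univ := fun y hy =>
    (LipschitzWith.of_dist_le_mul fun z w => by
      rw [dist_eq_norm, dist_eq_norm, ← mul_sub]
      exact (norm_mul_le _ _).trans <| mul_le_mul_of_nonneg_right
        ((hK y (hmem y hy)).trans (Real.le_coe_toNNReal K)) (norm_nonneg _)).lipschitzOnWith
  have hsol (y : ℝ) : HasDerivAt (fun y => fundamentalSolution B y * f 0)
      (B y * (fundamentalSolution B y * f 0)) y := by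
    simpa only [mul_assoc] using (hasDerivAt_fundamentalSolution hB y).mul_const (f 0)
  exact ODE_solution_unique_of_mem_Ioo lipschitz (t₀ := 0)
    (by constructor <;> linarith [abs_nonneg x])
    (fun y _ => ⟨hf y, mem_univ _⟩) (fun y _ => ⟨hsol y, mem_univ _⟩)
    (by rw [fundamentalSolution_zero, one_mul]) (abs_lt.1 (lt_add_one _))

theorem fundamentalSolution_add_period (hB : Continuous B) {T : ℝ} (hT : Function.Periodic B T)
    (x : ℝ) :
    fundamentalSolution B (x + T) = fundamentalSolution B x * fundamentalSolution B T := by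
  have hshift (y : ℝ) : HasDerivAt (fun y => fundamentalSolution B (y + T))
      (B y * fundamentalSolution B (y + T)) y := by
    simpa only [hT y] using (hasDerivAt_fundamentalSolution hB (y + T)).comp_add_const y T
  simpa only [zero_add] using eq_fundamentalSolution_mul hB hshift x

theorem map_fundamentalSolution_neg (hB : Continuous B) (φ : 𝔸 →ₐ[ℝ] 𝔸) (hφ : Continuous φ)
    (hφB : ∀ x, φ (B (-x)) = -B x) (x : ℝ) :
    φ (fundamentalSolution B (-x)) = fundamentalSolution B x := by
  have hreflect (y : ℝ) : HasDerivAt (fun y => φ (fundamentalSolution B (-y)))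
      (B y * φ (fundamentalSolution B (-y))) y := by
    let Φ : 𝔸 →L[ℝ] 𝔸 := ⟨φ.toLinearMap, hφ⟩
    have := Φ.hasFDerivAt.comp_hasDerivAt y <|
      (hasDerivAt_fundamentalSolution hB (-y)).scomp y (hasDerivAt_neg y)
    refine this.congr_deriv ?_
    change φ ((-1 : ℝ) • (B (-y) * fundamentalSolution B (-y))) = _
    rw [neg_one_smul, map_neg, map_mul, hφB, neg_mul, neg_neg]
  simpa [fundamentalSolution_zero] using eq_fundamentalSolution_mul hB hreflect x

theorem map_fundamentalSolution_mul_self (hB : Continuous B) {T : ℝ} (hT : Function.Periodic B T)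
    (φ : 𝔸 →ₐ[ℝ] 𝔸) (hφ : Continuous φ) (hφB : ∀ x, φ (B (-x)) = -B x) :
    φ (fundamentalSolution B T) * fundamentalSolution B T = 1 := by
  have hneg := map_fundamentalSolution_neg hB φ hφ hφB (-T)
  rw [neg_neg] at hneg
  rw [hneg, ← fundamentalSolution_add_period hB hT, neg_add_cancel, fundamentalSolution_zero]

theorem exp_smul_mul_exp_neg_smul (H : 𝔸) (x : ℝ) :
    NormedSpace.exp (x • H) * NormedSpace.exp (-x • H) = 1 := by
  let _ : NormedAlgebra ℚ 𝔸 := .restrictScalars ℚ ℝ 𝔸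
  have hcomm : Commute (x • H) (-x • H) := ((Commute.refl H).smul_left x).smul_right (-x)
  rw [← NormedSpace.exp_add_of_commute hcomm, ← add_smul, add_neg_cancel, zero_smul,
    NormedSpace.exp_zero]

/-- The generator `e^{-xH} V(x) e^{xH}` of the equation `Y' = (H + V) Y` in the interaction
picture, that is, after the substitution `Z = e^{-xH} Y`. -/
def interactionGenerator (H : 𝔸) (V : ℝ → 𝔸) (x : ℝ) : 𝔸 :=
  NormedSpace.exp (-x • H) * V x * NormedSpace.exp (x • H)

theorem continuous_interactionGenerator (H : 𝔸) {V : ℝ → 𝔸} (hV : Continuous V) :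
    Continuous (interactionGenerator H V) := by
  have hexp : Continuous fun x : ℝ => NormedSpace.exp (x • H) :=
    continuous_iff_continuousAt.2 fun x => (hasDerivAt_exp_smul_const H x).continuousAt
  exact ((hexp.comp continuous_neg).mul hV).mul hexp

theorem fundamentalSolution_const_add (H : 𝔸) {V : ℝ → 𝔸} (hV : Continuous V) (x : ℝ) :
    fundamentalSolution (fun s => H + V s) x =
      NormedSpace.exp (x • H) * fundamentalSolution (interactionGenerator H V) x := by
  set Z := fundamentalSolution (interactionGenerator H V)
  have hderiv (y : ℝ) : HasDerivAt (fun y : ℝ => NormedSpace.exp (y • H) * Z y)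
      ((H + V y) * (NormedSpace.exp (y • H) * Z y)) y := by
    refine ((hasDerivAt_exp_smul_const' H y).mul
      (hasDerivAt_fundamentalSolution (continuous_interactionGenerator H hV) y)).congr_deriv ?_
    simp only [interactionGenerator, mul_assoc, add_mul]
    rw [← mul_assoc (NormedSpace.exp (y • H)) (NormedSpace.exp (-y • H)),
      exp_smul_mul_exp_neg_smul, one_mul]
  simpa [fundamentalSolution_zero, Z] using
    (eq_fundamentalSolution_mul (B := fun s => H + V s) (by fun_prop) hderiv x).symm

end DysonSeries

section SchrodingerSystem

attribute [local instance] Matrix.linftyOpNormedRing Matrix.linftyOpNormedAlgebra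

variable {n : Type*} {Q : ℝ → Matrix n n ℂ}

/-- The contribution of the potential `Q` to the first-order system in the coordinates
`(u₊, u₋)`. -/
def potentialGenerator (Q : ℝ → Matrix n n ℂ) (ρ x : ℝ) : Matrix (n ⊕ n) (n ⊕ n) ℂ :=
  (1 / (2 * Complex.I * ρ) : ℂ) • Matrix.fromBlocks (Q x) (Q x) (-Q x) (-Q x)

theorem continuous_potentialGenerator (hQ : Continuous Q) (ρ : ℝ) :
    Continuous (potentialGenerator Q ρ) :=
  (Continuous.matrix_fromBlocks hQ hQ hQ.neg hQ.neg).const_smul (1 / (2 * Complex.I * ρ) : ℂ)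

variable [DecidableEq n]

/-- The generator `diag(iρ, -iρ)` of the free equation `-Ψ'' = ρ²Ψ` in the coordinates `(u₊, u₋)`
for which `Ψ = u₊ + u₋` and `Ψ' = iρ(u₊ - u₋)`. -/
def freeGenerator (n : Type*) [DecidableEq n] (ρ : ℝ) : Matrix (n ⊕ n) (n ⊕ n) ℂ :=
  Matrix.diagonal (Sum.elim (fun _ => Complex.I * ρ) fun _ => -(Complex.I * ρ))

/-- The generator of the first-order system equivalent to `-Ψ'' + QΨ = ρ²Ψ` in the coordinates
`(u₊, u₋)` for which `Ψ = u₊ + u₋` and `Ψ' = iρ(u₊ - u₋)`. -/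
def schrodingerGenerator (Q : ℝ → Matrix n n ℂ) (ρ x : ℝ) : Matrix (n ⊕ n) (n ⊕ n) ℂ :=
  freeGenerator n ρ + potentialGenerator Q ρ x

theorem periodic_schrodingerGenerator {T : ℝ} (hQ : Function.Periodic Q T) (ρ : ℝ) :
    Function.Periodic (schrodingerGenerator Q ρ) T := fun x => by
  simp only [schrodingerGenerator, potentialGenerator, hQ x]

theorem schrodingerGenerator_neg_map_conj (hQ : ∀ x, (Q (-x)).map (starRingEnd ℂ) = Q x)
    (ρ x : ℝ) :
    (schrodingerGenerator Q ρ (-x)).map (starRingEnd ℂ) = -schrodingerGenerator Q ρ x := by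
  have hQ' (i j) : starRingEnd ℂ (Q (-x) i j) = Q x i j := congr_fun₂ (hQ x) i j
  ext (i | i) (j | j) <;>
    simp [schrodingerGenerator, freeGenerator, potentialGenerator, Matrix.diagonal_apply,
      apply_ite (starRingEnd ℂ), Complex.conj_ofNat, hQ', neg_ite, add_comm]

theorem continuous_schrodingerGenerator (hQ : Continuous Q) (ρ : ℝ) :
    Continuous (schrodingerGenerator Q ρ) :=
  continuous_const.add (continuous_potentialGenerator hQ ρ)

variable [Fintype n]

/-- The monodromy matrix of `-Ψ'' + QΨ = ρ²Ψ` over the period `π`, in the coordinates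
`(u₊, u₋)`. -/
def monodromy (Q : ℝ → Matrix n n ℂ) (ρ : ℝ) : Matrix (n ⊕ n) (n ⊕ n) ℂ :=
  fundamentalSolution (schrodingerGenerator Q ρ) Real.pi

theorem monodromy_map_conj_mul_self (hQ : Continuous Q) (hper : Function.Periodic Q Real.pi)
    (hPT : ∀ x, (Q (-x)).map (starRingEnd ℂ) = Q x) (ρ : ℝ) :
    (monodromy Q ρ).map (starRingEnd ℂ) * monodromy Q ρ = 1 :=
  map_fundamentalSolution_mul_self (continuous_schrodingerGenerator hQ ρ)
    (periodic_schrodingerGenerator hper ρ) (Complex.conjAe : ℂ →ₐ[ℝ] ℂ).mapMatrix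
    (continuous_id.matrix_map Complex.continuous_conj) (schrodingerGenerator_neg_map_conj hPT ρ)

theorem exp_smul_freeGenerator (ρ x : ℝ) :
    NormedSpace.exp (x • freeGenerator n ρ) =
      Matrix.diagonal (Sum.elim (fun _ => Complex.exp (Complex.I * ρ * x))
        fun _ => Complex.exp (-(Complex.I * ρ * x))) := by
  rw [freeGenerator, ← Matrix.diagonal_smul, Matrix.exp_diagonal, Pi.exp_def]
  congr 1
  ext (i | i) <;> simp [← Complex.exp_eq_exp_ℂ, mul_comm]

theorem norm_exp_smul_freeGenerator_le (ρ x : ℝ) :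
    ‖NormedSpace.exp (x • freeGenerator n ρ)‖ ≤ 1 := by
  rw [exp_smul_freeGenerator, Matrix.linfty_opNorm_diagonal, pi_norm_le_iff_of_nonneg zero_le_one]
  rintro (i | i) <;> simp [Complex.norm_exp]

theorem exists_norm_interactionGenerator_le (hQ : Continuous Q) {T : ℝ} (hT : T ≠ 0)
    (hper : Function.Periodic Q T) :
    ∃ k, ∀ ρ > 0, ∀ x,
      ‖interactionGenerator (freeGenerator n ρ) (potentialGenerator Q ρ) x‖ ≤ k / ρ := by
  let W := fun x => Matrix.fromBlocks (Q x) (Q x) (-Q x) (-Q x)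
  have hWper : Function.Periodic W T := fun x => by simp only [W, hper x]
  obtain ⟨k, hk⟩ := (hWper.isBounded_of_continuous hT
    (Continuous.matrix_fromBlocks hQ hQ hQ.neg hQ.neg)).exists_norm_le
  refine ⟨k / 2, fun ρ hρ x => ?_⟩
  calc ‖interactionGenerator (freeGenerator n ρ) (potentialGenerator Q ρ) x‖
      ≤ ‖NormedSpace.exp (-x • freeGenerator n ρ)‖ * ‖potentialGenerator Q ρ x‖ *
          ‖NormedSpace.exp (x • freeGenerator n ρ)‖ :=
        norm_mul₃_le
    _ ≤ 1 * ‖potentialGenerator Q ρ x‖ * 1 := by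
        gcongr <;> exact norm_exp_smul_freeGenerator_le ρ _
    _ = 1 / (2 * ρ) * ‖W x‖ := by
        rw [potentialGenerator, norm_smul]
        simp [abs_of_pos hρ, W]
    _ ≤ 1 / (2 * ρ) * k := by
        gcongr
        exact hk (W x) ⟨x, rfl⟩
    _ = k / 2 / ρ := by field_simp

theorem toBlocks₁₁_interactionGenerator (ρ x : ℝ) :
    (interactionGenerator (freeGenerator n ρ) (potentialGenerator Q ρ) x).toBlocks₁₁ =
      (1 / (2 * Complex.I * ρ) : ℂ) • Q x := by
  have hexp : Complex.exp (-(Complex.I * ρ * x)) * Complex.exp (Complex.I * ρ * x) = 1 := by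
    rw [← Complex.exp_add, neg_add_cancel, Complex.exp_zero]
  have hconj := congr_arg₂ (fun D D' => D * potentialGenerator Q ρ x * D')
    (exp_smul_freeGenerator (n := n) ρ (-x)) (exp_smul_freeGenerator ρ x)
  refine (congr_arg Matrix.toBlocks₁₁ hconj).trans (Matrix.ext fun i j => ?_)
  simp only [Matrix.toBlocks₁₁, Matrix.of_apply, Matrix.mul_diagonal, Matrix.diagonal_mul,
    Sum.elim_inl, Complex.ofReal_neg, mul_neg]
  rw [mul_right_comm, hexp, one_mul]
  rfl

/-- The monodromy matrix in the interaction picture, that is, with the free evolution divided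
out. -/
def reducedMonodromy (Q : ℝ → Matrix n n ℂ) (ρ : ℝ) : Matrix (n ⊕ n) (n ⊕ n) ℂ :=
  fundamentalSolution (interactionGenerator (freeGenerator n ρ) (potentialGenerator Q ρ)) Real.pi

theorem monodromy_eq (hQ : Continuous Q) (ρ : ℝ) :
    monodromy Q ρ = Matrix.diagonal (Sum.elim (fun _ => Complex.exp (Complex.I * ρ * Real.pi))
      fun _ => Complex.exp (-(Complex.I * ρ * Real.pi))) * reducedMonodromy Q ρ := by
  have h := fundamentalSolution_const_add (freeGenerator n ρ)
    (continuous_potentialGenerator hQ ρ) Real.pi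
  exact h.trans (congr_arg (· * reducedMonodromy Q ρ) (exp_smul_freeGenerator ρ Real.pi))

theorem exists_norm_reducedMonodromy_sub_sum_le (hQ : Continuous Q)
    (hper : Function.Periodic Q Real.pi) (k : ℕ) :
    ∃ C, ∀ ρ ≥ 1, ‖reducedMonodromy Q ρ - ∑ j ∈ Finset.range k, dysonTerm
      (interactionGenerator (freeGenerator n ρ) (potentialGenerator Q ρ)) j Real.pi‖ ≤
        C / ρ ^ k := by
  obtain ⟨K, hK⟩ := exists_norm_interactionGenerator_le hQ Real.pi_ne_zero hper
  have hK0 : 0 ≤ K := by simpa using (norm_nonneg _).trans (hK 1 one_pos 0)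
  refine ⟨‖(1 : Matrix (n ⊕ n) (n ⊕ n) ℂ)‖ * ((K * Real.pi) ^ k * Real.exp (K * Real.pi)),
    fun ρ hρ => ?_⟩
  have hρ0 : 0 < ρ := one_pos.trans_le hρ
  refine (norm_fundamentalSolution_sub_sum_le
    (continuous_interactionGenerator _ (continuous_potentialGenerator hQ ρ))
    (fun s _ => hK ρ hρ0 s) k).trans ?_
  rw [abs_of_pos Real.pi_pos, mul_div_assoc, mul_div_right_comm, ← div_pow, mul_div_right_comm]
  gcongr
  exact div_le_self hK0 hρ

theorem tendsto_sqrt_smul_reducedMonodromy_sub_one (hQ : Continuous Q)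
    (hper : Function.Periodic Q Real.pi) :
    Tendsto (fun ρ : ℝ => ((√ρ : ℝ) : ℂ) • (reducedMonodromy Q ρ - 1)) atTop (𝓝 0) := by
  obtain ⟨C, hC⟩ := exists_norm_reducedMonodromy_sub_sum_le hQ hper 1
  refine squeeze_zero_norm' ?_ (Real.tendsto_sqrt_atTop.const_div_atTop C)
  filter_upwards [eventually_ge_atTop 1] with ρ hρ
  have hC' : ‖reducedMonodromy Q ρ - 1‖ ≤ C / ρ := by simpa [dysonTerm] using hC ρ hρ
  calc ‖((√ρ : ℝ) : ℂ) • (reducedMonodromy Q ρ - 1)‖ = √ρ * ‖reducedMonodromy Q ρ - 1‖ := by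
        rw [norm_smul, Complex.norm_real, Real.norm_of_nonneg (Real.sqrt_nonneg ρ)]
    _ ≤ √ρ * (C / (√ρ * √ρ)) := by
        rw [Real.mul_self_sqrt (zero_le_one.trans hρ)]
        gcongr
    _ = C / √ρ := by
        have : √ρ ≠ 0 := (Real.sqrt_pos.2 (one_pos.trans_le hρ)).ne'
        field_simp

theorem toBlocks₁₁_integral_interactionGenerator (hQ : Continuous Q) (ρ a b : ℝ) :
    (∫ x in a..b, interactionGenerator (freeGenerator n ρ) (potentialGenerator Q ρ) x).toBlocks₁₁ =
      (1 / (2 * Complex.I * ρ) : ℂ) • ∫ x in a..b, Q x := by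
  let π₁₁ : Matrix (n ⊕ n) (n ⊕ n) ℂ →L[ℝ] Matrix n n ℂ := LinearMap.toContinuousLinearMap
    { toFun := Matrix.toBlocks₁₁, map_add' := fun _ _ => rfl, map_smul' := fun _ _ => rfl }
  rw [← intervalIntegral.integral_smul]
  simp only [← toBlocks₁₁_interactionGenerator]
  exact (π₁₁.intervalIntegral_comp_comm ((continuous_interactionGenerator _
    (continuous_potentialGenerator hQ ρ)).intervalIntegrable a b)).symm

theorem tendsto_smul_reducedMonodromy_sub_one_sub_integral (hQ : Continuous Q)
    (hper : Function.Periodic Q Real.pi) :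
    Tendsto (fun ρ : ℝ => (ρ : ℂ) • (reducedMonodromy Q ρ - 1 - ∫ x in (0 : ℝ)..Real.pi,
      interactionGenerator (freeGenerator n ρ) (potentialGenerator Q ρ) x)) atTop (𝓝 0) := by
  obtain ⟨C, hC⟩ := exists_norm_reducedMonodromy_sub_sum_le hQ hper 2
  refine squeeze_zero_norm' ?_ (tendsto_id.const_div_atTop C)
  filter_upwards [eventually_ge_atTop 1] with ρ hρ
  set J := ∫ x in (0 : ℝ)..Real.pi,
    interactionGenerator (freeGenerator n ρ) (potentialGenerator Q ρ) x with hJ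
  have hC' : ‖reducedMonodromy Q ρ - 1 - J‖ ≤ C / ρ ^ 2 := by
    simpa [dysonTerm, Finset.sum_range_succ, sub_sub, hJ] using hC ρ hρ
  calc ‖(ρ : ℂ) • (reducedMonodromy Q ρ - 1 - J)‖ = ρ * ‖reducedMonodromy Q ρ - 1 - J‖ := by
        rw [norm_smul, Complex.norm_real, Real.norm_of_nonneg (zero_le_one.trans hρ)]
    _ ≤ ρ * (C / ρ ^ 2) := by gcongr
    _ = C / ρ := by field_simp

theorem tendsto_smul_toBlocks₁₁_reducedMonodromy_sub_one (hQ : Continuous Q)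
    (hper : Function.Periodic Q Real.pi) :
    Tendsto (fun ρ : ℝ => (ρ : ℂ) • (reducedMonodromy Q ρ - 1).toBlocks₁₁) atTop
      (𝓝 ((1 / (2 * Complex.I) : ℂ) • ∫ x in (0 : ℝ)..Real.pi, Q x)) := by
  have continuous_toBlocks₁₁ : Continuous
      (Matrix.toBlocks₁₁ : Matrix (n ⊕ n) (n ⊕ n) ℂ → Matrix n n ℂ) := by
    unfold Matrix.toBlocks₁₁
    fun_prop
  have toBlocks₁₁_smul_sub (c : ℂ) (M N : Matrix (n ⊕ n) (n ⊕ n) ℂ) :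
      (c • (M - N)).toBlocks₁₁ = c • (M.toBlocks₁₁ - N.toBlocks₁₁) := rfl
  have hlim := ((continuous_toBlocks₁₁.tendsto 0).comp
    (tendsto_smul_reducedMonodromy_sub_one_sub_integral hQ hper)).add_const
      ((1 / (2 * Complex.I) : ℂ) • ∫ x in (0 : ℝ)..Real.pi, Q x)
  rw [show (0 : Matrix (n ⊕ n) (n ⊕ n) ℂ).toBlocks₁₁ = 0 from rfl, zero_add] at hlim
  refine hlim.congr' ?_
  filter_upwards [eventually_ne_atTop 0] with ρ hρ
  have hρ' : (ρ : ℂ) ≠ 0 := by exact_mod_cast hρ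
  rw [Function.comp_apply, toBlocks₁₁_smul_sub, toBlocks₁₁_integral_interactionGenerator hQ,
    smul_sub, smul_smul, sub_add, sub_eq_self, sub_eq_zero]
  congr 1
  field_simp

theorem meanMatrix_eq_integral {m : ℕ} {Q : ℝ → Matrix (Fin m) (Fin m) ℂ} (hQ : Continuous Q) :
    meanMatrix Q = ∫ x in (0 : ℝ)..Real.pi, Q x := by
  ext i j
  let entry : Matrix (Fin m) (Fin m) ℂ →L[ℝ] ℂ := LinearMap.toContinuousLinearMap
    { toFun := fun M => M i j, map_add' := fun _ _ => rfl, map_smul' := fun _ _ => rfl }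
  exact entry.intervalIntegral_comp_comm (hQ.intervalIntegrable 0 Real.pi)

end SchrodingerSystem

section BlochSolution

attribute [local instance] Matrix.linftyOpNormedRing Matrix.linftyOpNormedAlgebra

variable {n : Type*}

/-- The function `Ψ = u₊ + u₋` recovered from the coordinates `u = (u₊, u₋)`. -/
def waveValue (u : n ⊕ n → ℂ) : n → ℂ := fun i => u (.inl i) + u (.inr i)

/-- The derivative `Ψ' = iρ(u₊ - u₋)` recovered from the coordinates `u = (u₊, u₋)`. -/
def waveSlope (ρ : ℝ) (u : n ⊕ n → ℂ) : n → ℂ :=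
  fun i => Complex.I * ρ * (u (.inl i) - u (.inr i))

theorem eq_zero_of_waveValue_of_waveSlope {ρ : ℝ} (hρ : ρ ≠ 0) {u : n ⊕ n → ℂ}
    (hvalue : waveValue u = 0) (hslope : waveSlope ρ u = 0) : u = 0 := by
  have hadd (i : n) : u (.inl i) + u (.inr i) = 0 := congr_fun hvalue i
  have hsub (i : n) : u (.inl i) - u (.inr i) = 0 := by
    simpa [waveSlope, hρ] using congr_fun hslope i
  ext (i | i)
  · rw [Pi.zero_apply]
    linear_combination (hadd i + hsub i) / 2
  · rw [Pi.zero_apply]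
    linear_combination (hadd i - hsub i) / 2

theorem contDiff_two_of_hasDerivAt {E : Type*} [NormedAddCommGroup E] [NormedSpace ℝ E]
    {f f' f'' : ℝ → E} (hf : ∀ x, HasDerivAt f (f' x) x) (hf' : ∀ x, HasDerivAt f' (f'' x) x)
    (hf'' : Continuous f'') : ContDiff ℝ 2 f := by
  have hderiv' : deriv f' = f'' := funext fun x => (hf' x).deriv
  rw [show (2 : WithTop ℕ∞) = 1 + 1 by norm_num, contDiff_succ_iff_deriv,
    show deriv f = f' from funext fun x => (hf x).deriv, contDiff_one_iff_deriv, hderiv']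
  exact ⟨fun x => (hf x).differentiableAt, by simp, fun x => (hf' x).differentiableAt, hf''⟩

theorem blochPhase_arg_div_pi {ξ : ℂ} (hξ : ‖ξ‖ = 1) :
    blochPhase (Complex.arg ξ / Real.pi) = ξ := by
  have hπ : (Real.pi : ℂ) ≠ 0 := by exact_mod_cast Real.pi_ne_zero
  calc blochPhase (Complex.arg ξ / Real.pi) = Complex.exp (Complex.arg ξ * Complex.I) := by
        rw [blochPhase]
        congr 1
        push_cast
        field_simp
    _ = ‖ξ‖ * Complex.exp (Complex.arg ξ * Complex.I) := by rw [hξ, Complex.ofReal_one, one_mul]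
    _ = ξ := Complex.norm_mul_exp_arg_mul_I ξ

variable [DecidableEq n] [Fintype n] {Q : ℝ → Matrix n n ℂ}

theorem schrodingerGenerator_mulVec (Q : ℝ → Matrix n n ℂ) (ρ x : ℝ) (u : n ⊕ n → ℂ) :
    schrodingerGenerator Q ρ x *ᵥ u = Sum.elim
      (fun i => Complex.I * ρ * u (.inl i) + 1 / (2 * Complex.I * ρ) * (Q x *ᵥ waveValue u) i)
      (fun i => -(Complex.I * ρ) * u (.inr i) -
        1 / (2 * Complex.I * ρ) * (Q x *ᵥ waveValue u) i) := by
  have hu : waveValue u = u ∘ Sum.inl + u ∘ Sum.inr := rfl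
  ext (i | i)
  all_goals
    simp [schrodingerGenerator, freeGenerator, potentialGenerator, Matrix.add_mulVec,
      Matrix.smul_mulVec, Matrix.fromBlocks_mulVec, Matrix.neg_mulVec, Matrix.mulVec_add,
      Matrix.mulVec_diagonal, hu, sub_eq_add_neg, ← neg_add, -neg_add_rev]

theorem hasDerivAt_waveValue {ρ x : ℝ} {u : ℝ → n ⊕ n → ℂ}
    (hu : HasDerivAt u (schrodingerGenerator Q ρ x *ᵥ u x) x) :
    HasDerivAt (fun y => waveValue (u y)) (waveSlope ρ (u x)) x := by
  rw [schrodingerGenerator_mulVec] at hu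
  rw [hasDerivAt_pi] at hu ⊢
  refine fun i => ((hu (.inl i)).add (hu (.inr i))).congr_deriv ?_
  simp only [waveSlope, Sum.elim_inl, Sum.elim_inr]
  ring

theorem hasDerivAt_waveSlope {ρ x : ℝ} (hρ : ρ ≠ 0) {u : ℝ → n ⊕ n → ℂ}
    (hu : HasDerivAt u (schrodingerGenerator Q ρ x *ᵥ u x) x) :
    HasDerivAt (fun y => waveSlope ρ (u y))
      (Q x *ᵥ waveValue (u x) - (ρ ^ 2 : ℂ) • waveValue (u x)) x := by
  have hρ' : (ρ : ℂ) ≠ 0 := by exact_mod_cast hρ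
  rw [schrodingerGenerator_mulVec] at hu
  rw [hasDerivAt_pi] at hu ⊢
  refine fun i => (((hu (.inl i)).sub (hu (.inr i))).const_mul (Complex.I * ρ)).congr_deriv ?_
  simp only [Sum.elim_inl, Sum.elim_inr, Pi.sub_apply, Pi.smul_apply, smul_eq_mul, waveValue]
  field_simp
  linear_combination ρ ^ 2 * (u x (.inl i) + u x (.inr i)) * 2 * Complex.I_sq

theorem hasDerivAt_fundamentalSolution_mulVec {G : ℝ → Matrix n n ℂ} (hG : Continuous G)
    (v : n → ℂ) (x : ℝ) :
    HasDerivAt (fun y => fundamentalSolution G y *ᵥ v)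
      (G x *ᵥ (fundamentalSolution G x *ᵥ v)) x := by
  let applyTo : Matrix n n ℂ →L[ℝ] n → ℂ := LinearMap.toContinuousLinearMap
    { toFun := fun M => M *ᵥ v
      map_add' := fun M N => Matrix.add_mulVec M N v
      map_smul' := fun c M => Matrix.smul_mulVec c M v }
  rw [Matrix.mulVec_mulVec]
  exact applyTo.hasFDerivAt.comp_hasDerivAt x (hasDerivAt_fundamentalSolution hG x)

theorem sq_mem_SpecLQ_of_hasDerivAt {m : ℕ} {Q : ℝ → Matrix (Fin m) (Fin m) ℂ}
    (hQ : Continuous Q) {ρ : ℝ} (hρ : ρ ≠ 0) {ξ : ℂ}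
    (hξ : ‖ξ‖ = 1) {u : ℝ → Fin m ⊕ Fin m → ℂ} (hu0 : u 0 ≠ 0)
    (hu : ∀ x, HasDerivAt u (schrodingerGenerator Q ρ x *ᵥ u x) x)
    (hquasi : ∀ x, u (x + Real.pi) = ξ • u x) : ((ρ ^ 2 : ℝ) : ℂ) ∈ SpecLQ Q := by
  have hΨ (x : ℝ) := hasDerivAt_waveValue (hu x)
  have hΨ' (x : ℝ) := hasDerivAt_waveSlope hρ (hu x)
  have hderiv : deriv (fun x => waveValue (u x)) = fun x => waveSlope ρ (u x) :=
    funext fun x => (hΨ x).deriv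
  have hΨcont : Continuous fun x => waveValue (u x) :=
    continuous_iff_continuousAt.2 fun x => (hΨ x).continuousAt
  refine ⟨Complex.arg ξ / Real.pi, ⟨?_, ?_⟩, fun x => waveValue (u x), ?_,
    contDiff_two_of_hasDerivAt hΨ hΨ' ((hQ.matrix_mulVec hΨcont).sub
      (by fun_prop)), ?_, ?_⟩
  · rw [lt_div_iff₀ Real.pi_pos, neg_one_mul]
    exact Complex.neg_pi_lt_arg ξ
  · exact div_le_one_of_le₀ (Complex.arg_le_pi ξ) Real.pi_pos.le
  · intro hzero
    have hslope : waveSlope ρ (u 0) = 0 := by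
      rw [← congr_fun hderiv 0, hzero]
      exact deriv_const 0 0
    exact hu0 (eq_zero_of_waveValue_of_waveSlope hρ (congr_fun hzero 0) hslope)
  · intro x
    rw [hderiv, (hΨ' x).deriv]
    push_cast
    abel
  · intro x
    ext i
    simp only [hquasi, blochPhase_arg_div_pi hξ, waveValue, Pi.smul_apply, smul_eq_mul, mul_add]

theorem sq_mem_SpecLQ_of_monodromy_mulVec {m : ℕ} {Q : ℝ → Matrix (Fin m) (Fin m) ℂ}
    (hQ : Continuous Q) (hper : Function.Periodic Q Real.pi)
    {ρ : ℝ} (hρ : ρ ≠ 0) {ξ : ℂ} (hξ : ‖ξ‖ = 1) {v : Fin m ⊕ Fin m → ℂ} (hv : v ≠ 0)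
    (heigen : monodromy Q ρ *ᵥ v = ξ • v) : ((ρ ^ 2 : ℝ) : ℂ) ∈ SpecLQ Q := by
  have hG := continuous_schrodingerGenerator hQ ρ
  refine sq_mem_SpecLQ_of_hasDerivAt hQ hρ hξ
    (u := fun x => fundamentalSolution (schrodingerGenerator Q ρ) x *ᵥ v) ?_
    (hasDerivAt_fundamentalSolution_mulVec hG v) fun x => ?_
  · rwa [fundamentalSolution_zero, Matrix.one_mulVec]
  · rw [fundamentalSolution_add_period hG (periodic_schrodingerGenerator hper ρ),
      ← Matrix.mulVec_mulVec, ← Matrix.mulVec_smul, ← heigen, monodromy]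

end BlochSolution

section UnimodularEigenvalue

variable {n : Type*} [Fintype n] [DecidableEq n] {M : Matrix n n ℂ}

/-- The characteristic function of `M` on the unit circle, as a function of the angle `θ`. The
factor `e^{i card(n) θ / 2}` balances the powers of `e^{iθ}`, so that `circleDet M` has constant
argument (modulo `π`) when `M⁻¹` is the entrywise conjugate of `M`. -/
def circleDet (M : Matrix n n ℂ) (θ : ℝ) : ℂ :=
  Complex.exp (Complex.I * (Fintype.card n * θ / 2)) *
    (1 - Complex.exp (-(Complex.I * θ)) • M).det

theorem continuous_circleDet (M : Matrix n n ℂ) : Continuous (circleDet M) := by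
  have hphase : Continuous fun θ : ℝ => Complex.exp (-(Complex.I * θ)) := by fun_prop
  exact Continuous.mul (by fun_prop)
    (continuous_const.sub (hphase.smul continuous_const)).matrix_det

theorem conj_circleDet_mul_det (hM : M.map (starRingEnd ℂ) * M = 1) (θ : ℝ) :
    (starRingEnd ℂ) (circleDet M θ) * M.det = (-1) ^ Fintype.card n * circleDet M θ := by
  set z := Complex.exp (Complex.I * θ) with hz
  have hz_inv : Complex.exp (-(Complex.I * θ)) = z⁻¹ := Complex.exp_neg _
  have hz0 : z ≠ 0 := Complex.exp_ne_zero _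
  have hconj_z : (starRingEnd ℂ) z⁻¹ = z := by
    rw [← hz_inv, ← Complex.exp_conj, hz]
    simp
  have hconj : (starRingEnd ℂ) (1 - z⁻¹ • M).det = (1 - z • M.map (starRingEnd ℂ)).det := by
    rw [RingHom.map_det]
    congr 1
    ext i j
    simp [Matrix.one_apply, hconj_z, -map_inv₀, apply_ite (starRingEnd ℂ)]
  have hfactor : (1 - z • M.map (starRingEnd ℂ)) * M = (-z) • (1 - z⁻¹ • M) := by
    rw [sub_mul, one_mul, Matrix.smul_mul, hM, smul_sub, smul_smul, neg_mul, mul_inv_cancel₀ hz0]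
    simp only [neg_smul, one_smul]
    abel
  have hphase : (starRingEnd ℂ) (Complex.exp (Complex.I * (Fintype.card n * θ / 2))) *
      z ^ Fintype.card n = Complex.exp (Complex.I * (Fintype.card n * θ / 2)) := by
    rw [← Complex.exp_conj, hz, ← Complex.exp_nat_mul, ← Complex.exp_add]
    congr 1
    simp only [map_mul, map_div₀, Complex.conj_I, Complex.conj_ofReal, map_natCast, map_ofNat]
    ring
  rw [circleDet, hz_inv, map_mul, hconj, mul_assoc, ← Matrix.det_mul, hfactor, Matrix.det_smul,
    neg_pow z]
  linear_combination (-1) ^ Fintype.card n * (1 - z⁻¹ • M).det * hphase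

theorem im_circleDet_div_circleDet (hM : M.map (starRingEnd ℂ) * M = 1) (θ₁ θ₂ : ℝ) :
    (circleDet M θ₂ / circleDet M θ₁).im = 0 := by
  by_cases h₁ : circleDet M θ₁ = 0
  · simp [h₁]
  have hdet : M.det ≠ 0 := by
    intro h
    simpa [h] using congr_arg Matrix.det hM
  have h₁' : (starRingEnd ℂ) (circleDet M θ₁) ≠ 0 := by simpa using h₁
  rw [← Complex.conj_eq_iff_im, map_div₀, div_eq_div_iff h₁' h₁]
  apply mul_right_cancel₀ hdet
  linear_combination circleDet M θ₁ * conj_circleDet_mul_det hM θ₂ -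
    circleDet M θ₂ * conj_circleDet_mul_det hM θ₁

theorem exists_mulVec_eq_exp_smul_of_circleDet_eq_zero {θ : ℝ} (h : circleDet M θ = 0) :
    ∃ v, v ≠ 0 ∧ M *ᵥ v = Complex.exp (Complex.I * θ) • v := by
  have hdet : (1 - Complex.exp (-(Complex.I * θ)) • M).det = 0 :=
    (mul_eq_zero.1 h).resolve_left (Complex.exp_ne_zero _)
  obtain ⟨v, hv, hker⟩ := Matrix.exists_mulVec_eq_zero_iff.2 hdet
  rw [Matrix.sub_mulVec, Matrix.one_mulVec, Matrix.smul_mulVec, sub_eq_zero,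
    Complex.exp_neg] at hker
  exact ⟨v, hv, (eq_inv_smul_iff₀ (Complex.exp_ne_zero _)).1 hker ▸ rfl⟩

theorem exists_unimodular_eigenvalue (hM : M.map (starRingEnd ℂ) * M = 1) {θ₁ θ₂ : ℝ}
    (hsign : (circleDet M θ₂ / circleDet M θ₁).re < 0) :
    ∃ ξ : ℂ, ‖ξ‖ = 1 ∧ ∃ v, v ≠ 0 ∧ M *ᵥ v = ξ • v := by
  have h₁ : circleDet M θ₁ ≠ 0 := by
    intro h
    simp [h] at hsign
  have hcont : Continuous fun θ => (circleDet M θ / circleDet M θ₁).re :=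
    Complex.continuous_re.comp ((continuous_circleDet M).div_const _)
  have hone : (circleDet M θ₁ / circleDet M θ₁).re = 1 := by rw [div_self h₁, Complex.one_re]
  obtain ⟨θ, hθ⟩ : ∃ θ, (circleDet M θ / circleDet M θ₁).re = 0 :=
    mem_range_of_exists_le_of_exists_ge hcont ⟨θ₂, hsign.le⟩ ⟨θ₁, hone ▸ zero_le_one⟩
  have hratio : circleDet M θ / circleDet M θ₁ = 0 :=
    Complex.ext hθ (im_circleDet_div_circleDet hM θ₁ θ)
  refine ⟨_, ?_, exists_mulVec_eq_exp_smul_of_circleDet_eq_zero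
    ((div_eq_zero_iff.1 hratio).resolve_right h₁)⟩
  rw [mul_comm, Complex.norm_exp_ofReal_mul_I]

end UnimodularEigenvalue

theorem tendsto_det_fromBlocks_of_tendsto_smul {ι R m n : Type*} [CommRing R] [TopologicalSpace R]
    [IsTopologicalRing R] [Fintype m] [DecidableEq m] [Fintype n] [DecidableEq n] {l : Filter ι}
    {A : ι → Matrix m m R} {B : ι → Matrix m n R} {C : ι → Matrix n m R} {D : ι → Matrix n n R}
    {A' : Matrix m m R} {D' : Matrix n n R} {a b c : ι → R}
    (hA : Tendsto (fun t => (a t * b t) • A t) l (𝓝 A')) (hB : Tendsto (fun t => a t • B t) l (𝓝 0))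
    (hC : Tendsto (fun t => (c t * b t) • C t) l (𝓝 0))
    (hD : Tendsto (fun t => c t • D t) l (𝓝 D')) :
    Tendsto (fun t => (a t * b t) ^ Fintype.card m * c t ^ Fintype.card n *
      (Matrix.fromBlocks (A t) (B t) (C t) (D t)).det) l (𝓝 (A'.det * D'.det)) := by
  have hfactor (t : ι) : Matrix.fromBlocks ((a t * b t) • A t) (a t • B t) ((c t * b t) • C t)
      (c t • D t) = Matrix.fromBlocks (a t • 1) 0 0 (c t • 1) *
        Matrix.fromBlocks (A t) (B t) (C t) (D t) * Matrix.fromBlocks (b t • 1) 0 0 1 := by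
    simp [Matrix.fromBlocks_multiply, smul_smul, mul_comm]
  have hdet (t : ι) : (Matrix.fromBlocks ((a t * b t) • A t) (a t • B t) ((c t * b t) • C t)
      (c t • D t)).det = (a t * b t) ^ Fintype.card m * c t ^ Fintype.card n *
        (Matrix.fromBlocks (A t) (B t) (C t) (D t)).det := by
    simp only [hfactor, Matrix.det_mul, Matrix.det_fromBlocks_zero₂₁, Matrix.det_smul,
      Matrix.det_one]
    ring
  have hcont : Continuous fun X : Matrix m m R × Matrix m n R × Matrix n m R × Matrix n n R =>
      (Matrix.fromBlocks X.1 X.2.1 X.2.2.1 X.2.2.2).det := by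
    fun_prop
  have hlim := (hcont.tendsto (A', 0, 0, D')).comp
    (hA.prodMk_nhds (hB.prodMk_nhds (hC.prodMk_nhds hD)))
  simpa only [Function.comp_def, hdet, Matrix.det_fromBlocks_zero₂₁] using hlim

theorem tendsto_mul_exp_div_sub_one (z : ℂ) :
    Tendsto (fun ρ : ℝ => (ρ : ℂ) * (Complex.exp (z / ρ) - 1)) atTop (𝓝 z) := by
  have hderiv : HasDerivAt (fun y : ℝ => Complex.exp (z * y)) z 0 := by
    simpa using ((Complex.ofRealCLM.hasDerivAt (x := 0)).const_mul z).cexp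
  have hinv : Tendsto (fun ρ : ℝ => ρ⁻¹) atTop (𝓝[≠] 0) :=
    tendsto_inv_atTop_nhdsGT_zero.mono_right (nhdsWithin_mono _ fun y (hy : 0 < y) => hy.ne')
  refine (hderiv.tendsto_slope_zero.comp hinv).congr fun ρ => ?_
  simp [div_eq_mul_inv]

theorem tendsto_exp_div (z : ℂ) : Tendsto (fun ρ : ℝ => Complex.exp (z / ρ)) atTop (𝓝 1) := by
  have hinv : Tendsto (fun ρ : ℝ => z / (ρ : ℂ)) atTop (𝓝 0) := by
    simpa [div_eq_mul_inv] using
      (tendsto_inv₀_cobounded.comp (RCLike.tendsto_ofReal_atTop_cobounded ℂ)).const_mul z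
  simpa using hinv.cexp

theorem one_sub_smul_diagonal_mul_one_add {R n : Type*} [CommRing R] [Fintype n] [DecidableEq n]
    (z α β : R) (N : Matrix (n ⊕ n) (n ⊕ n) R) :
    1 - z • (Matrix.diagonal (Sum.elim (fun _ => α) fun _ => β) * (1 + N)) = Matrix.fromBlocks
      (1 - (z * α) • (1 + N.toBlocks₁₁)) (-((z * α) • N.toBlocks₁₂))
      (-((z * β) • N.toBlocks₂₁)) (1 - (z * β) • (1 + N.toBlocks₂₂)) := by
  ext (i | i) (j | j) <;>
    simp [Matrix.one_apply, Matrix.toBlocks₁₁, Matrix.toBlocks₁₂, Matrix.toBlocks₂₁,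
      Matrix.toBlocks₂₂, mul_assoc, mul_add, Matrix.diagonal_apply]

theorem tendsto_smul_one_sub_exp_smul_one_add {E : Type*} [Ring E] [Module ℂ E]
    [TopologicalSpace E] [IsTopologicalAddGroup E] [ContinuousSMul ℂ E] {N : ℝ → E} {A : E}
    (hN : Tendsto (fun ρ : ℝ => (ρ : ℂ) • N ρ) atTop (𝓝 ((1 / (2 * Complex.I)) • A))) (x : ℂ) :
    Tendsto (fun ρ : ℝ => (2 * Complex.I * ρ) •
      (1 - Complex.exp (Complex.I * x / 2 / ρ) • (1 + N ρ))) atTop (𝓝 (x • 1 - A)) := by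
  have hlim := (((tendsto_mul_exp_div_sub_one (Complex.I * x / 2)).smul_const (1 : E)).add
    ((tendsto_exp_div (Complex.I * x / 2)).smul hN)).const_smul (-(2 * Complex.I))
  have hvalue : x • (1 : E) - A = -(2 * Complex.I) •
      ((Complex.I * x / 2) • 1 + (1 : ℂ) • (1 / (2 * Complex.I)) • A) := by
    match_scalars
    · linear_combination x * Complex.I_sq
    · field_simp
  rw [hvalue]
  refine hlim.congr fun ρ => ?_
  module

theorem exp_sub_exp_neg_eq_two_I_mul_sin (ρ : ℝ) :
    Complex.exp (Complex.I * ρ * Real.pi) - Complex.exp (-(Complex.I * ρ * Real.pi)) =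
      2 * Complex.I * (Real.sin (Real.pi * ρ) : ℝ) := by
  have h := Complex.two_sin (Real.pi * ρ)
  rw [show -(Real.pi * ρ : ℂ) * Complex.I = -(Complex.I * ρ * Real.pi) by ring,
    show (Real.pi * ρ : ℂ) * Complex.I = Complex.I * ρ * Real.pi by ring] at h
  push_cast
  linear_combination -Complex.I * h + (Complex.exp (Complex.I * ρ * Real.pi) -
    Complex.exp (-(Complex.I * ρ * Real.pi))) * Complex.I_sq

theorem isBoundedUnder_norm_mul_inv_two_I_mul_sin {l : Filter ℝ} {c : ℝ} (hc : 0 < c)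
    (hsin : ∀ᶠ ρ in l, c ≤ |Real.sin (Real.pi * ρ)|) {u : ℝ → ℂ} (hu : ∀ ρ, ‖u ρ‖ = 1) :
    IsBoundedUnder (· ≤ ·) l
      (norm ∘ fun ρ : ℝ => u ρ * (2 * Complex.I * (Real.sin (Real.pi * ρ) : ℝ))⁻¹) := by
  refine isBoundedUnder_of_eventually_le (a := (2 * c)⁻¹) ?_
  filter_upwards [hsin] with ρ hρ
  rw [Function.comp_apply, norm_mul, hu, one_mul, norm_inv, norm_mul, norm_mul, Complex.norm_I,
    Complex.norm_two, Complex.norm_real, mul_one, Real.norm_eq_abs]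
  gcongr

/-- The angle `πρ - x / (2ρ)` at which the characteristic function of the monodromy matrix is
compared with the value at `x` of the characteristic polynomial of the mean matrix. To order `1/ρ`,
`e^{i testAngle x ρ}` is `e^{iπρ} (1 + x / (2iρ))`, an eigenvalue of `e^{iπρ} (1 + A / (2iρ))` when
`x` is an eigenvalue of `A`. -/
def testAngle (x ρ : ℝ) : ℝ := Real.pi * ρ - x / (2 * ρ)

theorem exp_I_mul_testAngle (x ρ : ℝ) : Complex.exp (Complex.I * testAngle x ρ) =
    Complex.exp (Complex.I * ρ * Real.pi) * Complex.exp (-(Complex.I * x / 2) / ρ) := by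
  rw [← Complex.exp_add, testAngle]
  congr 1
  push_cast
  ring

theorem exp_neg_I_mul_testAngle_mul_exp (x ρ : ℝ) :
    Complex.exp (-(Complex.I * testAngle x ρ)) * Complex.exp (Complex.I * ρ * Real.pi) =
      Complex.exp (Complex.I * x / 2 / ρ) := by
  rw [← Complex.exp_add, testAngle]
  congr 1
  push_cast
  ring

section MonodromyDeterminant

attribute [local instance] Matrix.linftyOpNormedRing Matrix.linftyOpNormedAlgebra

theorem tendsto_smul_one_sub_smul_one_add_of_le_abs_sin {E : Type*} [NormedRing E]
    [NormedAlgebra ℂ E] {l : Filter ℝ} (hl : l ≤ atTop) {c : ℝ} (hc : 0 < c)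
    (hsin : ∀ᶠ ρ in l, c ≤ |Real.sin (Real.pi * ρ)|) {N : ℝ → E} (hN : Tendsto N l (𝓝 0)) (x : ℝ) :
    Tendsto (fun ρ : ℝ => (Complex.exp (Complex.I * testAngle x ρ) *
      (2 * Complex.I * (Real.sin (Real.pi * ρ) : ℝ))⁻¹) •
        (1 - (Complex.exp (-(Complex.I * testAngle x ρ)) *
          Complex.exp (-(Complex.I * ρ * Real.pi))) • (1 + N ρ))) l (𝓝 1) := by
  have hunit (ρ : ℝ) : ‖Complex.exp (Complex.I * ρ * Real.pi)‖ = 1 := by simp [Complex.norm_exp]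
  have hunit' (ρ : ℝ) : ‖Complex.exp (-(Complex.I * ρ * Real.pi))‖ = 1 := by
    simp [Complex.norm_exp]
  have hexp : Tendsto (fun ρ : ℝ => (Complex.exp (-(Complex.I * x / 2) / ρ) - 1) • (1 : E)) l
      (𝓝 0) := by
    simpa using ((((tendsto_exp_div _).mono_left hl).sub_const 1).smul_const (1 : E))
  have hlim := (((isBoundedUnder_norm_mul_inv_two_I_mul_sin hc hsin hunit).smul_tendsto_zero
    hexp).sub ((isBoundedUnder_norm_mul_inv_two_I_mul_sin hc hsin hunit').smul_tendsto_zero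
      hN)).const_add 1
  rw [sub_zero, add_zero] at hlim
  refine hlim.congr' ?_
  filter_upwards [hsin] with ρ hρ
  have hsin0 : (2 * Complex.I * (Real.sin (Real.pi * ρ) : ℝ) : ℂ) ≠ 0 :=
    mul_ne_zero (mul_ne_zero two_ne_zero Complex.I_ne_zero)
      (mod_cast abs_pos.1 (hc.trans_le hρ))
  have hexp0 : Complex.exp (Complex.I * testAngle x ρ) ≠ 0 := Complex.exp_ne_zero _
  have hdiff := exp_sub_exp_neg_eq_two_I_mul_sin ρ
  have hangle := exp_I_mul_testAngle x ρ
  rw [Complex.exp_neg (Complex.I * testAngle x ρ)]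
  generalize (2 * Complex.I * (Real.sin (Real.pi * ρ) : ℝ) : ℂ) = w at *
  generalize Complex.exp (Complex.I * testAngle x ρ) = t at *
  generalize Complex.exp (-(Complex.I * x / 2) / ρ) = e at *
  match_scalars
  · field_simp
    linear_combination -hdiff - hangle
  · field_simp

variable {n : Type*} [Fintype n] [DecidableEq n]

theorem pow_mul_circleDet_eq {θ ρ s : ℝ} (hρ : 0 ≤ ρ) (M : Matrix (n ⊕ n) (n ⊕ n) ℂ) :
    ((ρ / s : ℝ) : ℂ) ^ Fintype.card n * circleDet M θ =
      (2 * Complex.I * (√ρ : ℝ) * (√ρ : ℝ)) ^ Fintype.card n *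
        (Complex.exp (Complex.I * θ) * (2 * Complex.I * s)⁻¹) ^ Fintype.card n *
          (1 - Complex.exp (-(Complex.I * θ)) • M).det := by
  have hsqrt : ((√ρ : ℝ) : ℂ) * (√ρ : ℝ) = ρ := by exact_mod_cast Real.mul_self_sqrt hρ
  have hphase : Complex.exp (Complex.I * (Fintype.card (n ⊕ n) * θ / 2)) =
      Complex.exp (Complex.I * θ) ^ Fintype.card n := by
    rw [← Complex.exp_nat_mul, Fintype.card_sum]
    congr 1
    push_cast
    ring
  have hscale : 2 * Complex.I * (√ρ : ℝ) * (√ρ : ℝ) * (Complex.exp (Complex.I * θ) *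
      (2 * Complex.I * s)⁻¹) = (ρ / s : ℝ) * Complex.exp (Complex.I * θ) := by
    have := mul_ne_zero two_ne_zero Complex.I_ne_zero
    rw [mul_assoc (2 * Complex.I), hsqrt, mul_inv, Complex.ofReal_div]
    field_simp
  rw [circleDet, hphase, ← mul_pow, hscale, mul_pow, mul_assoc]

variable {Q : ℝ → Matrix n n ℂ}

theorem tendsto_sqrt_smul_submatrix_reducedMonodromy_sub_one (hQ : Continuous Q)
    (hper : Function.Periodic Q Real.pi) (r c : n → n ⊕ n) :
    Tendsto (fun ρ : ℝ => ((√ρ : ℝ) : ℂ) • (reducedMonodromy Q ρ - 1).submatrix r c) atTop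
      (𝓝 0) := by
  have hcont : Continuous fun M : Matrix (n ⊕ n) (n ⊕ n) ℂ => M.submatrix r c :=
    continuous_id.matrix_submatrix r c
  exact (hcont.tendsto 0).comp (tendsto_sqrt_smul_reducedMonodromy_sub_one hQ hper)

theorem tendsto_reducedMonodromy_sub_one (hQ : Continuous Q) (hper : Function.Periodic Q Real.pi) :
    Tendsto (fun ρ : ℝ => reducedMonodromy Q ρ - 1) atTop (𝓝 0) := by
  have hinv : Tendsto (fun ρ : ℝ => (((√ρ)⁻¹ : ℝ) : ℂ)) atTop (𝓝 0) := by
    exact_mod_cast (Complex.continuous_ofReal.tendsto 0).comp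
      (tendsto_inv_atTop_zero.comp Real.tendsto_sqrt_atTop)
  have hlim := hinv.smul (tendsto_sqrt_smul_reducedMonodromy_sub_one hQ hper)
  rw [smul_zero] at hlim
  refine hlim.congr' ?_
  filter_upwards [eventually_gt_atTop 0] with ρ hρ
  have hsqrt : ((√ρ : ℝ) : ℂ) ≠ 0 := by exact_mod_cast (Real.sqrt_pos.2 hρ).ne'
  rw [Complex.ofReal_inv, inv_smul_smul₀ hsqrt]

theorem tendsto_smul_one_sub_smul_toBlocks₁₁ (hQ : Continuous Q)
    (hper : Function.Periodic Q Real.pi) (x : ℝ) :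
    Tendsto (fun ρ : ℝ => (2 * Complex.I * (√ρ : ℝ) * (√ρ : ℝ)) •
      (1 - (Complex.exp (-(Complex.I * testAngle x ρ)) * Complex.exp (Complex.I * ρ * Real.pi)) •
        (1 + (reducedMonodromy Q ρ - 1).toBlocks₁₁))) atTop
      (𝓝 ((x : ℂ) • 1 - ∫ y in (0 : ℝ)..Real.pi, Q y)) := by
  refine (tendsto_smul_one_sub_exp_smul_one_add
    (tendsto_smul_toBlocks₁₁_reducedMonodromy_sub_one hQ hper) (x : ℂ)).congr' ?_
  filter_upwards [eventually_ge_atTop 0] with ρ hρ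
  have hsqrt : ((√ρ : ℝ) : ℂ) * (√ρ : ℝ) = ρ := by exact_mod_cast Real.mul_self_sqrt hρ
  rw [exp_neg_I_mul_testAngle_mul_exp, mul_assoc (2 * Complex.I), hsqrt]

theorem tendsto_smul_neg_smul_toBlocks₁₂ (hQ : Continuous Q)
    (hper : Function.Periodic Q Real.pi) (x : ℝ) :
    Tendsto (fun ρ : ℝ => (2 * Complex.I * (√ρ : ℝ)) •
      -((Complex.exp (-(Complex.I * testAngle x ρ)) * Complex.exp (Complex.I * ρ * Real.pi)) •
        (reducedMonodromy Q ρ - 1).toBlocks₁₂)) atTop (𝓝 0) := by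
  have hlim := ((tendsto_exp_div (Complex.I * x / 2)).const_mul (-(2 * Complex.I))).smul
    (tendsto_sqrt_smul_submatrix_reducedMonodromy_sub_one hQ hper Sum.inl Sum.inr)
  rw [smul_zero] at hlim
  refine hlim.congr fun ρ => ?_
  rw [exp_neg_I_mul_testAngle_mul_exp]
  change _ = (2 * Complex.I * (√ρ : ℝ)) • -(Complex.exp (Complex.I * x / 2 / ρ) •
    (reducedMonodromy Q ρ - 1).submatrix Sum.inl Sum.inr)
  module

theorem tendsto_smul_neg_smul_toBlocks₂₁ (hQ : Continuous Q)
    (hper : Function.Periodic Q Real.pi) {l : Filter ℝ} (hl : l ≤ atTop) {c : ℝ} (hc : 0 < c)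
    (hsin : ∀ᶠ ρ in l, c ≤ |Real.sin (Real.pi * ρ)|) (x : ℝ) :
    Tendsto (fun ρ : ℝ => (Complex.exp (Complex.I * testAngle x ρ) *
      (2 * Complex.I * (Real.sin (Real.pi * ρ) : ℝ))⁻¹ * (√ρ : ℝ)) •
        -((Complex.exp (-(Complex.I * testAngle x ρ)) * Complex.exp (-(Complex.I * ρ * Real.pi))) •
          (reducedMonodromy Q ρ - 1).toBlocks₂₁)) l (𝓝 0) := by
  have hunit (ρ : ℝ) : ‖-Complex.exp (-(Complex.I * ρ * Real.pi))‖ = 1 := by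
    simp [Complex.norm_exp]
  refine ((isBoundedUnder_norm_mul_inv_two_I_mul_sin hc hsin hunit).smul_tendsto_zero
    ((tendsto_sqrt_smul_submatrix_reducedMonodromy_sub_one hQ hper Sum.inr
      Sum.inl).mono_left hl)).congr fun ρ => ?_
  rw [Complex.exp_neg (Complex.I * testAngle x ρ)]
  have htest0 := Complex.exp_ne_zero (Complex.I * testAngle x ρ)
  generalize Complex.exp (Complex.I * testAngle x ρ) = t at *
  change _ = (_ : ℂ) • -((_ : ℂ) • (reducedMonodromy Q ρ - 1).submatrix Sum.inr Sum.inl)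
  match_scalars
  field_simp

theorem tendsto_pow_mul_circleDet_monodromy (hQ : Continuous Q)
    (hper : Function.Periodic Q Real.pi) {l : Filter ℝ} (hl : l ≤ atTop) {c : ℝ} (hc : 0 < c)
    (hsin : ∀ᶠ ρ in l, c ≤ |Real.sin (Real.pi * ρ)|) (x : ℝ) :
    Tendsto (fun ρ : ℝ => ((ρ / Real.sin (Real.pi * ρ) : ℝ) : ℂ) ^ Fintype.card n *
      circleDet (monodromy Q ρ) (testAngle x ρ)) l
        (𝓝 ((∫ y in (0 : ℝ)..Real.pi, Q y).charpoly.eval (x : ℂ))) := by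
  have hblock₂₂ : Tendsto (fun ρ => (reducedMonodromy Q ρ - 1).toBlocks₂₂) l (𝓝 0) :=
    ((continuous_id.matrix_submatrix Sum.inr Sum.inr).tendsto
      (0 : Matrix (n ⊕ n) (n ⊕ n) ℂ)).comp ((tendsto_reducedMonodromy_sub_one hQ hper).mono_left hl)
  have hlim := tendsto_det_fromBlocks_of_tendsto_smul
    ((tendsto_smul_one_sub_smul_toBlocks₁₁ hQ hper x).mono_left hl)
    ((tendsto_smul_neg_smul_toBlocks₁₂ hQ hper x).mono_left hl)
    (tendsto_smul_neg_smul_toBlocks₂₁ hQ hper hl hc hsin x)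
    (tendsto_smul_one_sub_smul_one_add_of_le_abs_sin hl hc hsin hblock₂₂ x)
  rw [Matrix.det_one, mul_one, Matrix.smul_one_eq_diagonal, ← Matrix.scalar_apply,
    ← Matrix.eval_charpoly] at hlim
  refine hlim.congr' ?_
  filter_upwards [hl (eventually_ge_atTop 0)] with ρ hρ
  rw [pow_mul_circleDet_eq hρ, monodromy_eq hQ, ← one_sub_smul_diagonal_mul_one_add,
    add_sub_cancel]

end MonodromyDeterminant

section OddRoot

theorem exists_re_eval_div_eval_neg_of_odd_rootMultiplicity {p : Polynomial ℂ} {a : ℝ}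
    (hodd : Odd (p.rootMultiplicity (a : ℂ))) :
    ∃ x₁ x₂ : ℝ, (p.eval (x₂ : ℂ) / p.eval (x₁ : ℂ)).re < 0 := by
  have hp : p ≠ 0 := by
    rintro rfl
    simp at hodd
  obtain ⟨q, hpq, hdvd⟩ := p.exists_eq_pow_rootMultiplicity_mul_and_not_dvd hp (a : ℂ)
  have hqa : q.eval (a : ℂ) ≠ 0 := fun h => hdvd (Polynomial.dvd_iff_isRoot.2 h)
  have hcont : ContinuousAt
      (fun e : ℝ => q.eval ((a + e : ℝ) : ℂ) / q.eval ((a - e : ℝ) : ℂ)) 0 := by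
    refine ContinuousAt.div (by fun_prop) (by fun_prop) (by simpa using hqa)
  have hpos : ∀ᶠ e in 𝓝[>] (0 : ℝ),
      0 < (q.eval ((a + e : ℝ) : ℂ) / q.eval ((a - e : ℝ) : ℂ)).re := by
    refine nhdsWithin_le_nhds
      ((Complex.continuous_re.continuousAt.comp hcont).eventually_const_lt ?_)
    simp [div_self hqa]
  obtain ⟨e, he, he0 : 0 < e⟩ := (hpos.and self_mem_nhdsWithin).exists
  refine ⟨a - e, a + e, ?_⟩
  have hpow : (e : ℂ) ^ p.rootMultiplicity (a : ℂ) ≠ 0 := pow_ne_zero _ (mod_cast he0.ne')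
  have hratio : p.eval ((a + e : ℝ) : ℂ) / p.eval ((a - e : ℝ) : ℂ) =
      -(q.eval ((a + e : ℝ) : ℂ) / q.eval ((a - e : ℝ) : ℂ)) := by
    have heval (y : ℂ) : p.eval y = (y - a) ^ p.rootMultiplicity (a : ℂ) * q.eval y := by
      conv_lhs => rw [hpq]
      simp
    rw [heval, heval, Complex.ofReal_add, Complex.ofReal_sub, add_sub_cancel_left,
      sub_sub_cancel_left, hodd.neg_pow, neg_mul, div_neg, mul_div_mul_left _ _ hpow]
  rw [hratio, Complex.neg_re]
  exact neg_lt_zero.2 he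

end OddRoot

section HighEnergySpectrum

theorem two_mul_abs_sub_round_le_abs_sin (ρ : ℝ) :
    2 * |ρ - round ρ| ≤ |Real.sin (Real.pi * ρ)| := by
  have hround := abs_sub_round ρ
  have hbound := Real.mul_abs_le_abs_sin (x := Real.pi * ρ - round ρ * Real.pi) (by
    rw [mul_comm _ Real.pi, ← mul_sub, abs_mul, abs_of_pos Real.pi_pos]
    nlinarith [Real.pi_pos])
  rw [Real.sin_sub_int_mul_pi, abs_mul, abs_zpow, abs_neg, abs_one, one_zpow, one_mul,
    mul_comm _ Real.pi, ← mul_sub, abs_mul, abs_of_pos Real.pi_pos, ← mul_assoc,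
    div_mul_cancel₀ _ Real.pi_ne_zero] at hbound
  exact hbound

theorem sq_mem_SpecLQ_of_re_circleDet_div_neg {m : ℕ} {Q : ℝ → Matrix (Fin m) (Fin m) ℂ}
    (hQ : Continuous Q) (hper : Function.Periodic Q Real.pi)
    (hPT : ∀ x, (Q (-x)).map (starRingEnd ℂ) = Q x) {ρ : ℝ} (hρ : ρ ≠ 0) {θ₁ θ₂ : ℝ}
    (hneg : (circleDet (monodromy Q ρ) θ₂ / circleDet (monodromy Q ρ) θ₁).re < 0) :
    ((ρ ^ 2 : ℝ) : ℂ) ∈ SpecLQ Q := by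
  obtain ⟨ξ, hξ, v, hv, heigen⟩ :=
    exists_unimodular_eigenvalue (monodromy_map_conj_mul_self hQ hper hPT ρ) hneg
  exact sq_mem_SpecLQ_of_monodromy_mulVec hQ hper hρ hξ hv heigen

theorem eventually_sq_mem_SpecLQ {m : ℕ} {Q : ℝ → Matrix (Fin m) (Fin m) ℂ}
    (hQ : Continuous Q) (hper : Function.Periodic Q Real.pi)
    (hPT : ∀ x, (Q (-x)).map (starRingEnd ℂ) = Q x) {a : ℝ}
    (hodd : Odd ((meanMatrix Q).charpoly.rootMultiplicity (a : ℂ)))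
    {l : Filter ℝ} (hl : l ≤ atTop) {c : ℝ} (hc : 0 < c)
    (hsin : ∀ᶠ ρ in l, c ≤ |Real.sin (Real.pi * ρ)|) :
    ∀ᶠ ρ in l, ((ρ ^ 2 : ℝ) : ℂ) ∈ SpecLQ Q := by
  obtain ⟨x₁, x₂, hneg⟩ := exists_re_eval_div_eval_neg_of_odd_rootMultiplicity hodd
  have hx₁ : (meanMatrix Q).charpoly.eval (x₁ : ℂ) ≠ 0 := by
    intro h
    simp [h] at hneg
  have hlim (x : ℝ) := tendsto_pow_mul_circleDet_monodromy hQ hper hl hc hsin x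
  rw [← meanMatrix_eq_integral hQ] at hlim
  have hratio := (Complex.continuous_re.tendsto _).comp ((hlim x₂).div (hlim x₁) hx₁)
  filter_upwards [hratio.eventually_lt_const hneg, hsin, hl (eventually_gt_atTop 0)]
    with ρ hρneg hρsin hρ
  have hscale : ((ρ / Real.sin (Real.pi * ρ) : ℝ) : ℂ) ^ Fintype.card (Fin m) ≠ 0 :=
    pow_ne_zero _ (mod_cast div_ne_zero hρ.ne' (abs_pos.1 (hc.trans_le hρsin)))
  rw [Function.comp_apply, Pi.div_apply, mul_div_mul_left _ _ hscale] at hρneg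
  exact sq_mem_SpecLQ_of_re_circleDet_div_neg hQ hper hPT hρ.ne' hρneg

theorem exists_forall_sq_mem_SpecLQ {m : ℕ} {Q : ℝ → Matrix (Fin m) (Fin m) ℂ}
    (hQ : Continuous Q) (hper : Function.Periodic Q Real.pi)
    (hPT : ∀ x, (Q (-x)).map (starRingEnd ℂ) = Q x) {a : ℝ}
    (hodd : Odd ((meanMatrix Q).charpoly.rootMultiplicity (a : ℂ)))
    {δ : ℝ} (hδ : 0 < δ) :
    ∃ R : ℝ, ∀ ρ ≥ R, δ ≤ |ρ - round ρ| → ((ρ ^ 2 : ℝ) : ℂ) ∈ SpecLQ Q := by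
  have hsin : ∀ᶠ ρ in atTop ⊓ 𝓟 {ρ : ℝ | δ ≤ |ρ - round ρ|},
      2 * δ ≤ |Real.sin (Real.pi * ρ)| := by
    filter_upwards [mem_inf_of_right (mem_principal_self _)] with ρ (hρ : δ ≤ |ρ - round ρ|)
    linarith [two_mul_abs_sub_round_le_abs_sin ρ]
  have hmem := eventually_sq_mem_SpecLQ hQ hper hPT hodd inf_le_left (by positivity) hsin
  rwa [eventually_inf_principal, eventually_atTop] at hmem

end HighEnergySpectrum

section MainPart

variable {S : Set ℝ}

theorem Icc_diff_subset_of_sq_mem {R δ : ℝ} (hδ : δ ≤ 1)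
    (hS : ∀ ρ ≥ R, δ ≤ |ρ - round ρ| → ρ ^ 2 ∈ S) (r : ℝ) :
    Icc 0 r \ S ⊆ Icc 0 (R ^ 2) ∪ ⋃ k ∈ Finset.range (⌊√r⌋₊ + 2),
      closedBall ((k : ℝ) ^ 2) (δ * (2 * √r + 1)) := by
  rintro x ⟨⟨hx0, hxr⟩, hxS⟩
  have hsq : √x ^ 2 = x := Real.sq_sqrt hx0
  have hx0' : 0 ≤ √x := Real.sqrt_nonneg x
  have hxr' : √x ≤ √r := Real.sqrt_le_sqrt hxr
  rcases lt_or_ge √x R with hxR | hRx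
  · exact Or.inl ⟨hx0, by rw [← hsq]; gcongr⟩
  have hnear : |√x - round √x| < δ := by
    by_contra! hfar
    exact hxS (hsq ▸ hS _ hRx hfar)
  obtain ⟨hlow, hupp⟩ := abs_lt.1 hnear
  obtain ⟨k, hk⟩ : ∃ k : ℕ, round √x = k := by
    refine Int.eq_ofNat_of_zero_le ?_
    have : ((-1 : ℤ) : ℝ) < round √x := by push_cast; linarith
    exact_mod_cast this
  rw [hk, Int.cast_natCast] at hnear hlow hupp
  refine Or.inr (mem_iUnion₂.2 ⟨k, Finset.mem_range.2 ?_, ?_⟩)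
  · have := Nat.lt_floor_add_one √r
    have : (k : ℝ) < (⌊√r⌋₊ + 2 : ℕ) := by push_cast; linarith
    exact_mod_cast this
  · calc dist x ((k : ℝ) ^ 2) = |√x - k| * (√x + k) := by
          rw [Real.dist_eq, ← abs_of_nonneg (by positivity : 0 ≤ √x + k), ← abs_mul]
          congr 1
          linear_combination -hsq
      _ ≤ δ * (2 * √r + 1) := by
        exact mul_le_mul hnear.le (by linarith) (by positivity) ((abs_nonneg _).trans hnear.le)

theorem measureReal_Icc_diff_le_of_sq_mem {R δ r : ℝ} (hδ0 : 0 ≤ δ) (hδ1 : δ ≤ 1)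
    (hS : ∀ ρ ≥ R, δ ≤ |ρ - round ρ| → ρ ^ 2 ∈ S) (hr : 1 ≤ r) :
    volume.real (Icc 0 r \ S) ≤ R ^ 2 + 18 * δ * r := by
  have hsqrt : 1 ≤ √r := Real.one_le_sqrt.2 hr
  have hsq : √r * √r = r := Real.mul_self_sqrt (by positivity)
  have hballs : volume.real (⋃ k ∈ Finset.range (⌊√r⌋₊ + 2),
      closedBall ((k : ℝ) ^ 2) (δ * (2 * √r + 1))) ≤ 18 * δ * r := by
    calc _ ≤ ∑ k ∈ Finset.range (⌊√r⌋₊ + 2),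
          volume.real (closedBall ((k : ℝ) ^ 2) (δ * (2 * √r + 1))) :=
          measureReal_biUnion_finset_le _ _
      _ = (⌊√r⌋₊ + 2) * (2 * (δ * (2 * √r + 1))) := by
          simp only [Real.volume_real_closedBall (show 0 ≤ δ * (2 * √r + 1) by positivity),
            Finset.sum_const, Finset.card_range, nsmul_eq_mul, Nat.cast_add, Nat.cast_ofNat]
      _ ≤ (3 * √r) * (2 * (δ * (3 * √r))) := by
          have := Nat.floor_le (Real.sqrt_nonneg r)
          gcongr <;> linarith
      _ = 18 * δ * r := by linear_combination 18 * δ * hsq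
  calc volume.real (Icc 0 r \ S)
    _ ≤ _ := measureReal_mono (Icc_diff_subset_of_sq_mem hδ1 hS r)
      (measure_union_ne_top (by simp) (((Finset.range _).finite_toSet.isCompact_biUnion
        fun k _ => isCompact_closedBall _ _).measure_ne_top))
    _ ≤ _ := measureReal_union_le _ _
    _ ≤ R ^ 2 + 18 * δ * r := by
      rw [Real.volume_real_Icc_of_le (sq_nonneg R), sub_zero]
      gcongr

theorem tendsto_measureReal_Icc_diff_div_of_sq_mem
    (hS : ∀ δ > 0, ∃ R : ℝ, ∀ ρ ≥ R, δ ≤ |ρ - round ρ| → ρ ^ 2 ∈ S) :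
    Tendsto (fun r : ℝ => volume.real (Icc 0 r \ S) / r) atTop (𝓝 0) := by
  rw [Metric.tendsto_nhds]
  intro ε hε
  obtain ⟨R, hR⟩ := hS (min 1 (ε / 36)) (by positivity)
  filter_upwards [eventually_ge_atTop 1, eventually_gt_atTop (2 * R ^ 2 / ε)] with r hr hrR
  have hbound := measureReal_Icc_diff_le_of_sq_mem (by positivity) (min_le_left _ _) hR hr
  have hδ : min 1 (ε / 36) * r ≤ ε / 36 * r := by gcongr; exact min_le_right _ _
  rw [div_lt_iff₀ hε] at hrR
  rw [Real.dist_0_eq_abs, abs_of_nonneg (by positivity), div_lt_iff₀ (by positivity)]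
  linarith

theorem tendsto_measureReal_Icc_diff_div_measureReal_inter
    (hS : Tendsto (fun r : ℝ => volume.real (Icc 0 r \ S) / r) atTop (𝓝 0)) :
    Tendsto (fun r : ℝ => volume.real (Icc 0 r \ S) / volume.real (S ∩ Icc 0 r)) atTop
      (𝓝 0) := by
  have hlim : Tendsto (fun r : ℝ => volume.real (Icc 0 r \ S) / r /
      (1 - volume.real (Icc 0 r \ S) / r)) atTop (𝓝 0) := by
    have hquot := hS.div (hS.const_sub 1) (by norm_num)
    rwa [sub_zero, zero_div] at hquot
  refine squeeze_zero' (Eventually.of_forall fun r => by positivity) ?_ hlim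
  filter_upwards [hS.eventually_lt_const one_pos, eventually_gt_atTop 0] with r hlt hr
  have hcover : r ≤ volume.real (S ∩ Icc 0 r) + volume.real (Icc 0 r \ S) := by
    have h := measureReal_union_le (μ := volume) (S ∩ Icc 0 r) (Icc 0 r \ S)
    rwa [inter_comm, inter_union_sdiff, Real.volume_real_Icc_of_le hr.le, sub_zero,
      inter_comm] at h
  rw [div_lt_one hr] at hlt
  calc volume.real (Icc 0 r \ S) / volume.real (S ∩ Icc 0 r)
    _ ≤ volume.real (Icc 0 r \ S) / (r - volume.real (Icc 0 r \ S)) := by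
      gcongr
      linarith
    _ = _ := by field_simp

end MainPart

/-- if `A` has a real eigenvalue of odd algebraic multiplicity, then the
spectrum of `L(Q)` contains the main part of `[0, ∞)`:
`μ([0,n] \ σ(L(Q))) / μ(σ(L(Q)) ∩ [0,n]) → 0` as `n → ∞`. -/
theorem statement17 {m : ℕ} (hm : 1 ≤ m) (Q : ℝ → Matrix (Fin m) (Fin m) ℂ)
    (hQcont : Continuous Q)
    (hQper : ∀ x : ℝ, Q (x + Real.pi) = Q x)
    (hQPT : ∀ (x : ℝ) (i j : Fin m), (starRingEnd ℂ) (Q (-x) i j) = Q x i j)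
    (μj : ℝ) (hμj : ((meanMatrix Q).charpoly).IsRoot (μj : ℂ))
    (hodd : Odd (((meanMatrix Q).charpoly).rootMultiplicity (μj : ℂ))) :
    Filter.Tendsto
      (fun n : ℕ =>
        (volume (Set.Icc (0:ℝ) (n : ℝ) \ {x : ℝ | ((x : ℂ)) ∈ SpecLQ Q})).toReal /
        (volume ({x : ℝ | ((x : ℂ)) ∈ SpecLQ Q} ∩ Set.Icc (0:ℝ) (n : ℝ))).toReal)
      Filter.atTop (nhds 0) := by
  have hPT (x : ℝ) : (Q (-x)).map (starRingEnd ℂ) = Q x := Matrix.ext fun i j => hQPT x i j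
  have hgaps := tendsto_measureReal_Icc_diff_div_of_sq_mem (S := {x : ℝ | (x : ℂ) ∈ SpecLQ Q})
    fun δ hδ => exists_forall_sq_mem_SpecLQ hQcont hQper hPT hodd hδ
  exact (tendsto_measureReal_Icc_diff_div_measureReal_inter hgaps).comp
    tendsto_natCast_atTop_atTop
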